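/- arXiv:2504.17061 — 2 statements merged into one kernel-verified Lean document; each statement's English description precedes it below -/
import Mathlib

section
/- Let ε ≥ 0 and let (X, u₀, {u₁,…,u_N}) be a setting with vN-M utilities. The following are equivalent: (i) the pair (u₀, {u₁,…,u_N}) satisfies Sequential ε-Strong Pareto; (ii) there exists a utilitarian aggregator w ∈ W₊₊ with ‖u₀ − w‖∞ ≤ ε/2. -/
/-- Sequential `ε`-Strong Pareto for the pair `(u₀, {u₁,…,u_N})` on `X`:
(a) there are no `x, y ∈ X` with `u₀(x) < u₀(y) − ε` and `uᵢ(x) ≥ uᵢ(y)` for all `i`;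
(b) there are no sequences `(x_n), (y_n)` in `X` and index `i` with
`uᵢ(x_n) > uᵢ(y_n)` for all `n`,
`liminf (u_j(x_n) − u_j(y_n))/(uᵢ(x_n) − uᵢ(y_n)) ≥ 0` for all `j ≠ i`, and
`liminf (u₀(y_n) − u₀(x_n) − ε)/(uᵢ(x_n) − uᵢ(y_n)) ≥ 0`
(limits inferior taken in the extended reals). -/
def SequentialStrongPareto {E : Type*} {N : ℕ} (X : Set E) (ε : ℝ)
    (u₀ : E → ℝ) (u : Fin N → E → ℝ) : Prop :=
  (¬ ∃ x ∈ X, ∃ y ∈ X, u₀ x < u₀ y - ε ∧ ∀ i, u i y ≤ u i x) ∧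
  (¬ ∃ (xs ys : ℕ → E) (i : Fin N), (∀ n, xs n ∈ X) ∧ (∀ n, ys n ∈ X) ∧
      (∀ n, u i (ys n) < u i (xs n)) ∧
      (∀ j, j ≠ i → (0 : EReal) ≤ Filter.liminf
        (fun n => (((u j (xs n) - u j (ys n)) / (u i (xs n) - u i (ys n)) : ℝ) : EReal))
        Filter.atTop) ∧
      (0 : EReal) ≤ Filter.liminf
        (fun n => (((u₀ (ys n) - u₀ (xs n) - ε) / (u i (xs n) - u i (ys n)) : ℝ) : EReal))
        Filter.atTop)

/-- nonnegative combinations of elements of a convex set -/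
lemma cone_comb {F : Type*} [AddCommGroup F] [Module ℝ F] {C : Set F} (hC : Convex ℝ C)
    {l m : ℝ} (hl : 0 ≤ l) (hm : 0 ≤ m) {c d : F} (hc : c ∈ C) (hd : d ∈ C) :
    ∃ k : ℝ, 0 ≤ k ∧ ∃ e ∈ C, k • e = l • c + m • d := by
  rcases (add_nonneg hl hm).eq_or_lt with h | h
  · have h1 : l = 0 := by linarith
    have h2 : m = 0 := by linarith
    exact ⟨0, le_rfl, c, hc, by simp [h1, h2]⟩
  · refine ⟨l + m, h.le, (l / (l + m)) • c + (m / (l + m)) • d,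
      hC hc hd (by positivity) (by positivity) (by field_simp), ?_⟩
    rw [smul_add, smul_smul, smul_smul]
    congr 2 <;> field_simp

/-- supergradient step -/
lemma supergrad {N : ℕ} {C : Set ((Fin N → ℝ) × ℝ)} (hC : Convex ℝ C) (hne : C.Nonempty)
    (hsym : ∀ c ∈ C, ∃ d ∈ C, d.1 = -c.1) (ha : ∀ c ∈ C, c.1 = 0 → c.2 ≤ 0) :
    ∃ q : Fin N → ℝ, ∀ c ∈ C, c.2 ≤ ∑ i, q i * c.1 i := by
  obtain ⟨c₀, hc₀⟩ := hne
  let L : Submodule ℝ (Fin N → ℝ) :=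
    { carrier := {v | ∃ l : ℝ, 0 ≤ l ∧ ∃ c ∈ C, v = l • c.1}
      zero_mem' := ⟨0, le_rfl, c₀, hc₀, by simp⟩
      add_mem' := by
        rintro v w ⟨l, hl, c, hc, rfl⟩ ⟨m, hm, d, hd, rfl⟩
        obtain ⟨k, hk, e, he, h⟩ := cone_comb hC hl hm hc hd
        exact ⟨k, hk, e, he, by simpa using (congrArg Prod.fst h).symm⟩
      smul_mem' := by
        rintro r v ⟨l, hl, c, hc, rfl⟩
        rcases le_total 0 r with hr | hr
        · exact ⟨r * l, by positivity, c, hc, by rw [smul_smul]⟩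
        · obtain ⟨d, hd, h⟩ := hsym c hc
          exact ⟨-r * l, mul_nonneg (by linarith) hl, d, hd, by rw [h, smul_smul]; simp⟩ }
  let s : PointedCone ℝ (L × ℝ) :=
    { carrier := {z | ∃ l : ℝ, 0 ≤ l ∧ ∃ c ∈ C, (z.1 : Fin N → ℝ) = l • c.1 ∧ -(l * c.2) ≤ z.2}
      smul_mem' := by
        rintro ⟨r, hr⟩ z ⟨l, hl, c, hc, h1, h2⟩
        refine ⟨r * l, by positivity, c, hc, ?_, ?_⟩
        · change r • (z.1 : Fin N → ℝ) = _
          rw [h1, smul_smul]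
        · change _ ≤ r * z.2
          nlinarith
      zero_mem' := ⟨0, le_rfl, c₀, hc₀, by simp, by simp⟩
      add_mem' := by
        rintro z w ⟨l, hl, c, hc, h1, h2⟩ ⟨m, hm, d, hd, h3, h4⟩
        obtain ⟨k, hk, e, he, h⟩ := cone_comb hC hl hm hc hd
        refine ⟨k, hk, e, he, ?_, ?_⟩
        · have := congrArg Prod.fst h
          simp at this
          simp [h1, h3, this]
        · have := congrArg Prod.snd h
          simp at this
          simp only [Prod.snd_add]
          linarith }
  let f : (L × ℝ) →ₗ.[ℝ] ℝ :=
    { domain := LinearMap.ker (LinearMap.fst ℝ L ℝ)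
      toFun := (LinearMap.snd ℝ L ℝ).comp (Submodule.subtype _) }
  obtain ⟨g, hg1, hg2⟩ := riesz_extension s f (by
      rintro ⟨⟨v, t⟩, hv⟩ ⟨l, hl, c, hc, h1, h2⟩
      have hv0 : v = 0 := by simpa [f] using hv
      subst hv0
      change 0 ≤ t
      simp only at h1 h2
      rcases hl.eq_or_lt with h | h
      · rw [← h] at h2; simpa using h2
      · have : c.1 = 0 := by
          have h1' : l • c.1 = 0 := by simpa using h1.symm
          exact (smul_eq_zero.1 h1').resolve_left h.ne'
        have := ha c hc this
        nlinarith) (by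
      rintro ⟨⟨v, l, hl, c, hc, hv⟩, t⟩
      refine ⟨⟨(0, -(l * c.2) - t), by simp [f]⟩, l, hl, c, hc, ?_, ?_⟩
      · simpa using hv
      · simp)
  obtain ⟨Q, hQ⟩ := LinearMap.exists_extend (g.comp (LinearMap.inl ℝ L ℝ))
  refine ⟨fun i => Q (Pi.single i 1), fun c hc => ?_⟩
  have hcL : c.1 ∈ L := ⟨1, zero_le_one, c, hc, by simp⟩
  have h1 : Q c.1 = g (⟨c.1, hcL⟩, 0) := by
    have := LinearMap.congr_fun hQ ⟨c.1, hcL⟩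
    simpa using this
  have h2 : g ((0 : L), -c.2) = -c.2 := hg1 ⟨(0, -c.2), by simp [f]⟩
  have h3 : 0 ≤ g (⟨c.1, hcL⟩, -c.2) := hg2 _ ⟨1, zero_le_one, c, hc, by simp, by simp⟩
  have h4 : g (⟨c.1, hcL⟩, -c.2) = g (⟨c.1, hcL⟩, 0) + g ((0 : L), -c.2) := by
    rw [← map_add]; simp
  have h5 : Q c.1 = ∑ i, Q (Pi.single i 1) * c.1 i := by
    rw [LinearMap.pi_apply_eq_sum_univ Q c.1]
    refine Finset.sum_congr rfl fun i _ => ?_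
    rw [smul_eq_mul, mul_comm]
    congr 2
    ext j; simp [Pi.single_apply, eq_comm]
  linarith

/-- separation step: the index `i` -/
lemma separate {N : ℕ} {C : Set ((Fin N → ℝ) × ℝ)} (hC : Convex ℝ C) (hne : C.Nonempty)
    (i : Fin N)
    (hb : ∃ δ > 0, ∀ l : ℝ, 0 ≤ l → ∀ c ∈ C, 1 - δ ≤ l * c.1 i →
      (∀ j, j ≠ i → -δ ≤ l * c.1 j) → -δ ≤ l * c.2 → False) :
    ∃ (p : Fin N → ℝ) (r : ℝ), (∀ j, 0 ≤ p j) ∧ 0 ≤ r ∧ 0 < p i ∧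
      ∀ c ∈ C, ∑ j, p j * c.1 j + r * c.2 ≤ 0 := by
  obtain ⟨c₀, hc₀⟩ := hne
  obtain ⟨δ, hδ, hb⟩ := hb
  let S : Set ((Fin N → ℝ) × ℝ) :=
    {z | ∃ l : ℝ, 0 ≤ l ∧ ∃ c ∈ C, z ≤ l • c}
  have hSC : Convex ℝ S := by
    rintro z ⟨l, hl, c, hc, h1⟩ w ⟨m, hm, d, hd, h2⟩ a b ha hb' hab
    obtain ⟨k, hk, e, he, h⟩ := cone_comb hC (mul_nonneg ha hl) (mul_nonneg hb' hm) hc hd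
    refine ⟨k, hk, e, he, ?_⟩
    rw [h, mul_smul, mul_smul]
    gcongr
  have hS0 : ∀ z ≤ 0, z ∈ S := fun z hz => ⟨0, le_rfl, c₀, hc₀, by simpa using hz⟩
  have hSs : ∀ r : ℝ, 0 ≤ r → ∀ z ∈ S, r • z ∈ S := by
    rintro r hr z ⟨l, hl, c, hc, h1⟩
    refine ⟨r * l, by positivity, c, hc, ?_⟩
    rw [mul_smul]
    gcongr
  have hnot : ((Pi.single i 1 : Fin N → ℝ), (0 : ℝ)) ∉ closure S := by
    intro hcl
    obtain ⟨z, ⟨l, hl, c, hc, hz⟩, hd⟩ := Metric.mem_closure_iff.1 hcl δ hδ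
    rw [Prod.dist_eq, max_lt_iff] at hd
    obtain ⟨hd1, hd2⟩ := hd
    have hd1' := (dist_pi_lt_iff hδ).1 hd1
    have hz1 : ∀ j, z.1 j ≤ l * c.1 j := fun j => by simpa using hz.1 j
    have hz2 : z.2 ≤ l * c.2 := by simpa using hz.2
    refine hb l hl c hc ?_ ?_ ?_
    · have := hd1' i
      simp only [Pi.single_eq_same, Real.dist_eq] at this
      have := (abs_lt.1 this).2
      linarith [hz1 i]
    · intro j hj
      have := hd1' j
      simp only [Pi.single_eq_of_ne hj, Real.dist_eq] at this
      have := (abs_lt.1 this).2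
      linarith [hz1 j]
    · simp only [Real.dist_eq] at hd2
      have := (abs_lt.1 hd2).2
      linarith
  obtain ⟨f, t, hft, hfi⟩ := geometric_hahn_banach_closed_point hSC.closure isClosed_closure hnot
  have ht : 0 < t := by simpa using hft 0 (subset_closure (hS0 0 le_rfl))
  have hle : ∀ z ∈ S, f z ≤ 0 := by
    intro z hz
    by_contra! hpos
    have := hft _ (subset_closure (hSs (t / f z) (by positivity) z hz))
    rw [map_smul, smul_eq_mul, div_mul_cancel₀ _ hpos.ne'] at this
    exact lt_irrefl _ this
  have hexp : ∀ c : (Fin N → ℝ) × ℝ,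
      f c = ∑ j, f (Pi.single j 1, 0) * c.1 j + f (0, 1) * c.2 := by
    intro c
    have h1 : c = ∑ j, c.1 j • ((Pi.single j 1 : Fin N → ℝ), (0 : ℝ)) + c.2 • ((0 : Fin N → ℝ), (1 : ℝ)) := by
      ext k
      · simp [Prod.fst_sum, Finset.sum_apply, Pi.single_apply]
      · simp [Prod.snd_sum]
    conv_lhs => rw [h1]
    simp only [map_add, map_sum, map_smul, smul_eq_mul]
    simp only [mul_comm]
  refine ⟨fun j => f (Pi.single j 1, 0), f (0, 1), fun j => ?_, ?_, by linarith, fun c hc => ?_⟩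
  · have := hle (-(Pi.single j 1, 0)) (hS0 _ (by
      rw [neg_nonpos]
      exact ⟨by simp, by simp⟩))
    rw [map_neg] at this
    linarith
  · have := hle (-(0, 1)) (hS0 _ (by
      rw [neg_nonpos]
      exact ⟨by simp, by simp⟩))
    rw [map_neg] at this
    linarith
  · rw [← hexp]
    exact hle c ⟨1, zero_le_one, c, hc, by simp⟩

/-- the multiplier vector -/
lemma multipliers {N : ℕ} {C : Set ((Fin N → ℝ) × ℝ)} (hC : Convex ℝ C) (hne : C.Nonempty)
    (hsym : ∀ c ∈ C, ∃ d ∈ C, d.1 = -c.1) (ha : ∀ c ∈ C, c.1 = 0 → c.2 ≤ 0)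
    (hb : ∀ i, ∃ δ > 0, ∀ l : ℝ, 0 ≤ l → ∀ c ∈ C, 1 - δ ≤ l * c.1 i →
      (∀ j, j ≠ i → -δ ≤ l * c.1 j) → -δ ≤ l * c.2 → False) :
    ∃ a : Fin N → ℝ, (∀ i, 0 < a i) ∧ ∀ c ∈ C, ∑ j, a j * c.1 j + c.2 ≤ 0 := by
  choose p r hp hr hpi hle using fun i => separate hC hne i (hb i)
  let P : Fin N → ℝ := fun j => ∑ i, p i j
  let R : ℝ := ∑ i, r i
  have hP : ∀ j, 0 < P j := fun j =>
    Finset.sum_pos' (fun i _ => hp i j) ⟨j, Finset.mem_univ _, hpi j⟩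
  have hR : 0 ≤ R := Finset.sum_nonneg fun i _ => hr i
  have hPR : ∀ c ∈ C, ∑ j, P j * c.1 j + R * c.2 ≤ 0 := by
    intro c hc
    have := Finset.sum_nonpos fun i (_ : i ∈ Finset.univ) => hle i c hc
    rw [Finset.sum_add_distrib, Finset.sum_comm, ← Finset.sum_mul] at this
    simpa only [P, R, Finset.sum_mul] using this
  rcases hR.eq_or_lt with h0 | h0
  · obtain ⟨q, hq⟩ := supergrad hC hne hsym ha
    have hz : ∀ c ∈ C, ∑ j, P j * c.1 j = 0 := by
      intro c hc
      have h1 := hPR c hc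
      obtain ⟨d, hd, hdc⟩ := hsym c hc
      have h2 := hPR d hd
      rw [← h0] at h1 h2
      simp only [hdc, Pi.neg_apply, mul_neg, Finset.sum_neg_distrib] at h2
      linarith
    let M : ℝ := 1 + ∑ i, |q i| / P i
    refine ⟨fun j => M * P j - q j, fun i => ?_, fun c hc => ?_⟩
    · have h1 : |q i| / P i ≤ ∑ i, |q i| / P i :=
        Finset.single_le_sum (f := fun i => |q i| / P i)
          (fun j _ => div_nonneg (abs_nonneg _) (hP j).le) (Finset.mem_univ i)
      have h2 : |q i| / P i < M := by simp only [M]; linarith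
      rw [div_lt_iff₀ (hP i)] at h2
      have := le_abs_self (q i)
      linarith
    · have h1 := hq c hc
      have h2 := hz c hc
      have : ∑ j, (M * P j - q j) * c.1 j = M * ∑ j, P j * c.1 j - ∑ j, q j * c.1 j := by
        rw [Finset.mul_sum, ← Finset.sum_sub_distrib]
        exact Finset.sum_congr rfl fun j _ => by ring
      rw [this, h2]; linarith
  · refine ⟨fun j => P j / R, fun i => div_pos (hP i) h0, fun c hc => ?_⟩
    have h1 := hPR c hc
    have : ∑ j, P j / R * c.1 j + c.2 = (∑ j, P j * c.1 j + R * c.2) / R := by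
      rw [add_div, Finset.sum_div]
      congr 1
      · exact Finset.sum_congr rfl fun j _ => by ring
      · field_simp
    rw [this]
    exact div_nonpos_of_nonpos_of_nonneg h1 h0.le

lemma liminf_nonneg_of_lower (f : ℕ → ℝ) (h : ∀ n : ℕ, -(2 * (1 / ((n : ℝ) + 2))) ≤ f n) :
    (0 : EReal) ≤ Filter.liminf (fun n => ((f n : ℝ) : EReal)) Filter.atTop := by
  have ht : Filter.Tendsto (fun n : ℕ => -(2 * (1 / ((n : ℝ) + 2)))) Filter.atTop (nhds 0) := by
    have h1 : Filter.Tendsto (fun n : ℕ => (n : ℝ) + 2) Filter.atTop Filter.atTop :=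
      Filter.tendsto_atTop_add_const_right _ _ tendsto_natCast_atTop_atTop
    have h2 := h1.inv_tendsto_atTop
    simpa using (h2.const_mul 2).neg
  have ht' : Filter.Tendsto (fun n : ℕ => ((-(2 * (1 / ((n : ℝ) + 2))) : ℝ) : EReal))
      Filter.atTop (nhds ((0 : ℝ) : EReal)) := (continuous_coe_real_ereal.tendsto 0).comp ht
  rw [← EReal.coe_zero, ← ht'.liminf_eq]
  exact Filter.liminf_le_liminf (Filter.Eventually.of_forall fun n => EReal.coe_le_coe_iff.2 (h n))

lemma eventually_lower (f : ℕ → ℝ)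
    (h : (0 : EReal) ≤ Filter.liminf (fun n => ((f n : ℝ) : EReal)) Filter.atTop)
    {η : ℝ} (hη : 0 < η) : ∀ᶠ n in Filter.atTop, -η < f n := by
  have h1 : ((-η : ℝ) : EReal) < Filter.liminf (fun n => ((f n : ℝ) : EReal)) Filter.atTop :=
    lt_of_lt_of_le (by exact_mod_cast neg_lt_zero.2 hη) h
  filter_upwards [Filter.eventually_lt_of_lt_liminf h1] with n hn
  exact_mod_cast hn


/-- Theorem: aggregation with Sequential `ε`-Strong Pareto.
Let `ε ≥ 0` and let `(X, u₀, {u₁,…,u_N})` be a setting with vN-M utilities.  Then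
Sequential `ε`-Strong Pareto holds iff there is a utilitarian aggregator
`w = Σᵢ aᵢ uᵢ + b` with all `aᵢ > 0` and `‖u₀ − w‖∞ ≤ ε/2`. -/
theorem stmt9 {E : Type*} [AddCommGroup E] [Module ℝ E]
    {N : ℕ} (hN : 1 ≤ N) {ε : ℝ} (hε : 0 ≤ ε)
    (X : Set E) (hXne : X.Nonempty) (hXconv : Convex ℝ X)
    (u₀ : E → ℝ) (u : Fin N → E → ℝ)
    (haff₀ : ∀ x ∈ X, ∀ y ∈ X, ∀ l : ℝ, 0 ≤ l → l ≤ 1 →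
      u₀ (l • x + (1 - l) • y) = l * u₀ x + (1 - l) * u₀ y)
    (haff : ∀ i : Fin N, ∀ x ∈ X, ∀ y ∈ X, ∀ l : ℝ, 0 ≤ l → l ≤ 1 →
      u i (l • x + (1 - l) • y) = l * u i x + (1 - l) * u i y) :
    SequentialStrongPareto X ε u₀ u ↔
      (∃ (a : Fin N → ℝ) (b : ℝ), (∀ i, 0 < a i) ∧
        ∀ x ∈ X, |u₀ x - ((∑ i, a i * u i x) + b)| ≤ ε / 2) := by
  constructor
  · rintro ⟨hA, hB⟩
    let C : Set ((Fin N → ℝ) × ℝ) :=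
      {c | ∃ x ∈ X, ∃ y ∈ X, c = (fun i => u i x - u i y, u₀ y - u₀ x - ε)}
    have hC : Convex ℝ C := by
      rintro c ⟨x, hx, y, hy, rfl⟩ d ⟨x', hx', y', hy', rfl⟩ a b ha hb hab
      obtain rfl : b = 1 - a := by linarith
      refine ⟨a • x + (1 - a) • x', hXconv hx hx' ha hb hab,
        a • y + (1 - a) • y', hXconv hy hy' ha hb hab, ?_⟩
      have ha1 : a ≤ 1 := by linarith
      rw [haff₀ x hx x' hx' a ha ha1, haff₀ y hy y' hy' a ha ha1]
      ext i
      · simp only [Prod.fst_add, Prod.smul_fst, Pi.add_apply, Pi.smul_apply, smul_eq_mul]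
        rw [haff i x hx x' hx' a ha ha1, haff i y hy y' hy' a ha ha1]
        ring
      · simp only [Prod.snd_add, Prod.smul_snd, smul_eq_mul]
        ring
    obtain ⟨x₀, hx₀⟩ := hXne
    obtain ⟨a, ha, hle⟩ := multipliers hC ⟨_, x₀, hx₀, x₀, hx₀, rfl⟩
      (by
        rintro c ⟨x, hx, y, hy, rfl⟩
        refine ⟨_, ⟨y, hy, x, hx, rfl⟩, ?_⟩
        ext i; simp)
      (by
        rintro c ⟨x, hx, y, hy, rfl⟩ h
        by_contra! hlt
        refine hA ⟨x, hx, y, hy, by simp only at hlt; linarith, fun i => ?_⟩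
        have := congrFun h i
        simp only [Pi.zero_apply] at this
        linarith)
      (by
        intro i
        by_contra! hcon
        have key : ∀ n : ℕ, ∃ x ∈ X, ∃ y ∈ X, u i y < u i x ∧
            (∀ j, j ≠ i → -(2 * (1 / ((n : ℝ) + 2))) ≤ (u j x - u j y) / (u i x - u i y)) ∧
            -(2 * (1 / ((n : ℝ) + 2))) ≤ (u₀ y - u₀ x - ε) / (u i x - u i y) := by
          intro n
          have hδ : (0 : ℝ) < 1 / ((n : ℝ) + 2) := by positivity
          have hδ2 : 1 / ((n : ℝ) + 2) ≤ 1 / 2 := by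
            apply one_div_le_one_div_of_le <;> norm_num
          obtain ⟨l, hl, c, ⟨x, hx, y, hy, rfl⟩, h1, h2, h3, -⟩ := hcon _ hδ
          generalize 1 / ((n : ℝ) + 2) = δ at *
          simp only at h1 h2 h3
          have hlpos : 0 < l := by
            rcases hl.eq_or_lt with h | h
            · rw [← h] at h1; linarith
            · exact h
          have hd : 0 < u i x - u i y := by
            by_contra! hneg
            nlinarith
          have gen : ∀ s : ℝ, -δ ≤ l * s → -(2 * δ) ≤ s / (u i x - u i y) := by
            intro s hs
            rw [le_div_iff₀ hd]
            by_contra! hlt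
            have e1 : l * s < l * (-(2 * δ) * (u i x - u i y)) :=
              mul_lt_mul_of_pos_left hlt hlpos
            have e2 : δ * (1 / 2) ≤ δ * (l * (u i x - u i y)) :=
              mul_le_mul_of_nonneg_left (by linarith) hδ.le
            nlinarith
          exact ⟨x, hx, y, hy, by linarith, fun j hj => gen _ (h2 j hj), gen _ h3⟩
        choose xs hxs ys hys k1 k2 k3 using key
        exact hB ⟨xs, ys, i, hxs, hys, k1,
          fun j hj => liminf_nonneg_of_lower _ fun n => k2 n j hj,
          liminf_nonneg_of_lower _ k3⟩)
    let h : E → ℝ := fun x => u₀ x - ∑ i, a i * u i x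
    have hosc : ∀ x ∈ X, ∀ y ∈ X, h y ≤ h x + ε := by
      intro x hx y hy
      have := hle _ ⟨x, hx, y, hy, rfl⟩
      simp only [mul_sub, Finset.sum_sub_distrib] at this
      simp only [h]
      linarith
    refine ⟨a, sSup (h '' X) - ε / 2, ha, fun x hx => ?_⟩
    have hbdd : BddAbove (h '' X) := ⟨h x + ε, by
      rintro _ ⟨y, hy, rfl⟩
      exact hosc x hx y hy⟩
    have h1 : h x ≤ sSup (h '' X) := le_csSup hbdd ⟨x, hx, rfl⟩
    have h2 : sSup (h '' X) ≤ h x + ε := csSup_le ⟨_, x, hx, rfl⟩ (by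
      rintro _ ⟨y, hy, rfl⟩
      exact hosc x hx y hy)
    generalize sSup (h '' X) = s at *
    simp only [h] at h1 h2
    rw [abs_le]
    constructor <;> linarith
  · rintro ⟨a, b, ha, hab⟩
    have hosc : ∀ x ∈ X, ∀ y ∈ X, u₀ y - u₀ x - ε ≤ -∑ i, a i * (u i x - u i y) := by
      intro x hx y hy
      have h1 := abs_le.1 (hab x hx)
      have h2 := abs_le.1 (hab y hy)
      simp only [mul_sub, Finset.sum_sub_distrib]
      linarith [h1.1, h2.2]
    refine ⟨?_, ?_⟩
    · rintro ⟨x, hx, y, hy, h1, h2⟩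
      have h3 := hosc x hx y hy
      have : 0 ≤ ∑ i, a i * (u i x - u i y) :=
        Finset.sum_nonneg fun i _ => mul_nonneg (ha i).le (by linarith [h2 i])
      linarith
    · rintro ⟨xs, ys, i, hxs, hys, h1, h2, h3⟩
      have hA : 0 < ∑ j, a j := Finset.sum_pos (fun j _ => ha j) ⟨i, Finset.mem_univ _⟩
      let η : ℝ := a i / (2 * (1 + ∑ j, a j))
      have hη : 0 < η := div_pos (ha i) (by linarith)
      have hη2 : η * (1 + ∑ j, a j) = a i / 2 := by
        simp only [η]
        field_simp
      have e3 := eventually_lower _ h3 hη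
      have e2 : ∀ᶠ n in Filter.atTop, ∀ j, j ≠ i →
          -η < (u j (xs n) - u j (ys n)) / (u i (xs n) - u i (ys n)) := by
        rw [Filter.eventually_all]
        intro j
        by_cases hj : j = i
        · exact Filter.Eventually.of_forall fun n h => absurd hj h
        · filter_upwards [eventually_lower _ (h2 j hj) hη] with n hn _ using hn
      obtain ⟨n, g3, g2⟩ := (e3.and e2).exists
      have hd : 0 < u i (xs n) - u i (ys n) := by linarith [h1 n]
      have ho := hosc _ (hxs n) _ (hys n)
      rw [lt_div_iff₀ hd] at g3
      set D := u i (xs n) - u i (ys n) with hD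
      have g4 : ∑ j, (a j * (-η * D) + if j = i then a i * D else 0)
          ≤ ∑ j, a j * (u j (xs n) - u j (ys n)) := by
        refine Finset.sum_le_sum fun j _ => ?_
        by_cases hj : j = i
        · subst hj
          rw [if_pos rfl, ← hD]
          have : 0 ≤ a j * (η * D) := by have := ha j; positivity
          linarith
        · rw [if_neg hj, add_zero]
          have := g2 j hj
          rw [lt_div_iff₀ hd] at this
          exact mul_le_mul_of_nonneg_left this.le (ha j).le
      rw [Finset.sum_add_distrib, ← Finset.sum_mul, Finset.sum_ite_eq' Finset.univ i] at g4
      simp only [Finset.mem_univ, if_true] at g4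
      have g5 : η * D + (∑ j, a j) * (η * D) = a i / 2 * D := by rw [← hη2]; ring
      have g6 : 0 < a i * D := mul_pos (ha i) hd
      linarith
end

section
/- Let ε₁ ≥ 0 and ε₂ ∈ [0,1]. Let (S, Σ_S) be a measurable space, let P₀, P₁, …, P_N be nonatomic probability measures on (S, Σ_S), let C be a nonempty set, let v₀, v₁, …, v_N : C → ℝ, and assume there exist c*, c_* ∈ C with v_j(c*) > v_j(c_*) for every j = 0, 1, …, N. For a finitely supported lottery p on C set U_j(p) = Σ_{c∈C} p(c) v_j(c), and let Σ_u = {E ∈ Σ_S : P₀(E) = P_i(E) for all i = 1,…,N}. Then the following are equivalent: (i) [ε₁-Lottery Pareto] for all finitely supported lotteries p, q on C, U_i(p) ≥ U_i(q) for all i = 1,…,N implies U₀(p) ≥ U₀(q) − ε₁; and [(ε₂/2)-Likelihood Dominance] for all E ∈ Σ_S and F ∈ Σ_u, P_i(E) ≥ P_i(F) for all i = 1,…,N implies P₀(E) ≥ P₀(F) − ε₂/2; (ii) there exist real numbers a₁, …, a_N ≥ 0 and b, and λ₁, …, λ_N ≥ 0 with Σ_{i=1}^N λ_i = 1, such that the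 function r : C → ℝ defined by r(c) = v₀(c) − Σ_{i=1}^N a_i v_i(c) − b satisfies sup_{c∈C} |r(c)| ≤ ε₁/2, and the signed measure R = P₀ − Σ_{i=1}^N λ_i P_i satisfies ‖R‖₁ ≤ ε₂. -/
open MeasureTheory

/-- A measure is nonatomic when every set of positive measure has a measurable subset
of strictly smaller positive measure. -/
def Nonatomic {S : Type*} [MeasurableSpace S] (μ : Measure S) : Prop :=
  ∀ E : Set S, MeasurableSet E → 0 < μ E →
    ∃ F : Set S, F ⊆ E ∧ MeasurableSet F ∧ 0 < μ F ∧ μ F < μ E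

/-- `p : C →₀ ℝ` is a finitely supported lottery: nonnegative values summing to `1`. -/
def IsLottery {C : Type*} (p : C →₀ ℝ) : Prop :=
  (∀ c, 0 ≤ p c) ∧ p.sum (fun _ t => t) = 1

/-- Expected utility of a finitely supported lottery `p` under a utility `v : C → ℝ`. -/
def lotteryEU {C : Type*} (v : C → ℝ) (p : C →₀ ℝ) : ℝ :=
  p.sum fun c t => t * v c

/-- splitting a set of positive measure into many disjoint pieces of positive measure -/
lemma split_many {S : Type*} [MeasurableSpace S] (μ : Measure S)
    (hμ : ∀ E : Set S, MeasurableSet E → 0 < μ E →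
      ∃ F : Set S, F ⊆ E ∧ MeasurableSet F ∧ 0 < μ F ∧ 0 < μ (E \ F)) (n : ℕ) :
    ∀ E : Set S, MeasurableSet E → 0 < μ E →
      ∃ A : Fin (n + 1) → Set S, (∀ k, MeasurableSet (A k)) ∧ (∀ k, A k ⊆ E) ∧
        (∀ k, 0 < μ (A k)) ∧ (∀ j k, j ≠ k → Disjoint (A j) (A k)) := by
  induction n with
  | zero =>
    intro E hE h
    refine ⟨fun _ => E, fun _ => hE, fun _ => subset_rfl, fun _ => h, fun j k hjk => ?_⟩
    exact absurd (Fin.ext (by omega)) hjk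
  | succ n ih =>
    intro E hE h
    obtain ⟨F, hFE, hF, h1, h2⟩ := hμ E hE h
    obtain ⟨A, hA1, hA2, hA3, hA4⟩ := ih (E \ F) (hE.diff hF) h2
    have hd : ∀ k, Disjoint F (A k) := fun k =>
      Set.disjoint_of_subset_right (hA2 k) Set.disjoint_sdiff_right
    refine ⟨Fin.cons F A, ?_, ?_, ?_, ?_⟩
    · intro k; cases k using Fin.cases <;> simp [hF, hA1]
    · intro k
      cases k using Fin.cases
      · simpa using hFE
      · simpa using (hA2 _).trans Set.sdiff_subset
    · intro k; cases k using Fin.cases <;> simp [h1, hA3]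
    · intro j k hjk
      cases j using Fin.cases with
      | zero =>
        cases k using Fin.cases with
        | zero => exact absurd rfl hjk
        | succ k => simpa using hd k
      | succ j =>
        cases k using Fin.cases with
        | zero => simpa using (hd j).symm
        | succ k => simpa using hA4 j k (fun h => hjk (by rw [h]))

/-- more unknowns than equations -/
lemma exists_kernel {ι : Type*} [Fintype ι] (M : ι → Fin (Fintype.card ι + 1) → ℝ) :
    ∃ c : Fin (Fintype.card ι + 1) → ℝ, c ≠ 0 ∧ ∀ i, ∑ k, M i k * c k = 0 := by
  have h : ¬ Function.Injective (Matrix.mulVecLin (Matrix.of M)) := by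
    intro hi
    have := LinearMap.finrank_le_finrank_of_injective hi
    simp at this
  rw [← LinearMap.ker_eq_bot, Submodule.eq_bot_iff] at h
  push Not at h
  obtain ⟨c, hc, h0⟩ := h
  refine ⟨c, h0, fun i => ?_⟩
  have := congrFun (LinearMap.mem_ker.1 hc) i
  simpa [Matrix.mulVec, dotProduct] using this

/-- closed bounded convex sets in Hilbert spaces have extreme points -/
lemma hilbert_extreme {H : Type*} [NormedAddCommGroup H] [InnerProductSpace ℝ H] [CompleteSpace H]
    (K : Set H) (hc : Convex ℝ K) (hcl : IsClosed K) (r : ℝ) (hb : ∀ g ∈ K, ‖g‖ ≤ r)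
    (hne : K.Nonempty) : (K.extremePoints ℝ).Nonempty := by
  let Φ : H ≃ₗ[ℝ] WeakDual ℝ H := 
    (InnerProductSpace.toDual ℝ H).toLinearEquiv.trans (WeakDual.toStrongDual (𝕜 := ℝ) (E := H)).symm
  have hΦ : ∀ g x, Φ g x = inner ℝ g x := by
    intro g x
    rfl
  have hcomp : IsCompact (Φ '' K) := by
    refine IsCompact.of_isClosed_subset (WeakDual.isCompact_closedBall (𝕜 := ℝ) (E := H) 0 r) ?_ ?_
    · have : Φ '' K = ⋂ (p : {p : H × ℝ // ∀ g ∈ K, inner ℝ g p.1 ≤ p.2}), {φ | φ p.1.1 ≤ p.1.2} := by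
        ext φ
        simp only [Set.mem_image, Set.mem_iInter, Set.mem_ofPred_eq]
        constructor
        · rintro ⟨g, hg, rfl⟩ p
          rw [hΦ]; exact p.2 g hg
        · intro h
          refine ⟨Φ.symm φ, ?_, by simp⟩
          by_contra hn
          obtain ⟨f, u, h1, h2⟩ := geometric_hahn_banach_closed_point hc hcl hn
          have := h ⟨((InnerProductSpace.toDual ℝ H).symm f, u), by
            intro g hg
            rw [real_inner_comm, InnerProductSpace.toDual_symm_apply]
            exact (h1 g hg).le⟩
          simp only at this
          rw [← Φ.apply_symm_apply φ, hΦ, real_inner_comm, InnerProductSpace.toDual_symm_apply] at this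
          linarith
      rw [this]
      exact isClosed_iInter fun p => isClosed_le (WeakDual.eval_continuous _) continuous_const
    · rintro _ ⟨g, hg, rfl⟩
      simp only [Set.mem_preimage, Metric.mem_closedBall, dist_zero_right]
      have : WeakDual.toStrongDual (Φ g) = InnerProductSpace.toDual ℝ H g := rfl
      rw [this, LinearIsometryEquiv.norm_map]
      exact hb g hg
  have : LocallyConvexSpace ℝ (WeakDual ℝ H) :=
    inferInstanceAs (LocallyConvexSpace ℝ (WeakBilin (topDualPairing ℝ H)))
  obtain ⟨φ, hφ⟩ := hcomp.extremePoints_nonempty (hne.image _)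
  obtain ⟨g, hg, rfl⟩ := hφ.1
  refine ⟨g, hg, fun a ha b hb hab => ?_⟩
  apply Φ.injective
  refine hφ.2 (Set.mem_image_of_mem _ ha) (Set.mem_image_of_mem _ hb) ?_
  obtain ⟨s, t, hs, ht, hst, rfl⟩ := hab
  exact ⟨s, t, hs, ht, hst, by simp⟩

/-- Lyapunov's convexity theorem, in the form: every `[0,1]`-valued function can be replaced by
the indicator of a measurable set. -/
lemma lyapunov {S ι : Type*} [MeasurableSpace S] [Fintype ι] (μ : ι → Measure S)
    [∀ i, IsFiniteMeasure (μ i)] (hna : ∀ i, Nonatomic (μ i)) (g₀ : S → ℝ) (hg₀ : Measurable g₀)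
    (h0 : ∀ x, 0 ≤ g₀ x) (h1 : ∀ x, g₀ x ≤ 1) :
    ∃ E, MeasurableSet E ∧ ∀ j, (μ j).real E = ∫ x, g₀ x ∂(μ j) := by
  classical
  let ν : Measure S := ∑ i, μ i
  have hle : ∀ j, μ j ≤ ν := fun j => Finset.single_le_sum (f := μ) (fun _ _ => Measure.zero_le _) (Finset.mem_univ j)
  have hac : ∀ j, μ j ≪ ν := fun j => Measure.absolutelyContinuous_of_le (hle j)
  have hfin : IsFiniteMeasure ν := inferInstance
  have hsplit : ∀ E : Set S, MeasurableSet E → 0 < ν E →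
      ∃ F : Set S, F ⊆ E ∧ MeasurableSet F ∧ 0 < ν F ∧ 0 < ν (E \ F) := by
    intro E hE h
    have : ∃ j, 0 < μ j E := by
      by_contra! hn
      have : ν E = 0 := by
        simp only [ν, Measure.finsetSum_apply]
        exact Finset.sum_eq_zero fun i _ => le_antisymm (hn i) zero_le
      exact h.ne' this
    obtain ⟨j, hj⟩ := this
    obtain ⟨F, hFE, hF, hF1, hF2⟩ := hna j E hE hj
    refine ⟨F, hFE, hF, hF1.trans_le (hle j F), lt_of_lt_of_le ?_ (hle j _)⟩
    rw [measure_sdiff hFE hF.nullMeasurableSet (measure_ne_top _ _)]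
    exact tsub_pos_of_lt hF2
  have hfb : ∀ j, MemLp (fun x => ((μ j).rnDeriv ν x).toReal) 2 ν := by
    intro j
    refine MemLp.of_bound (C := 1) (Measure.measurable_rnDeriv _ _).ennreal_toReal.aestronglyMeasurable ?_
    filter_upwards [Measure.rnDeriv_le_one_of_le (hle j)] with x hx
    rw [Real.norm_eq_abs, abs_of_nonneg ENNReal.toReal_nonneg]
    exact ENNReal.toReal_le_of_le_ofReal zero_le_one (by simpa using hx)
  let f : ι → Lp ℝ 2 ν := fun j => (hfb j).toLp
  have hin : ∀ j (g : Lp ℝ 2 ν), inner ℝ (f j) g = ∫ x, g x ∂(μ j) := by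
    intro j g
    rw [L2.inner_def, ← integral_rnDeriv_smul (hac j)]
    apply integral_congr_ae
    filter_upwards [(hfb j).coeFn_toLp] with x hx
    simp only [f, hx, smul_eq_mul]
    simp [mul_comm]
  let K : Set (Lp ℝ 2 ν) := {g | (0 ≤ g ∧ g ≤ indicatorConstLp 2 MeasurableSet.univ (measure_ne_top ν _) (1 : ℝ)) ∧
    ∀ j, inner ℝ (f j) g = ∫ x, g₀ x ∂(μ j)}
  have hu : (indicatorConstLp 2 MeasurableSet.univ (measure_ne_top ν _) (1 : ℝ) : Lp ℝ 2 ν) =ᵐ[ν] fun _ => 1 := by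
    filter_upwards [indicatorConstLp_coeFn (p := 2) (hs := MeasurableSet.univ) (hμs := measure_ne_top ν _) (c := (1 : ℝ))] with x hx
    simpa using hx
  have hK : ∀ g, g ∈ K ↔ (∀ᵐ x ∂ν, 0 ≤ g x ∧ g x ≤ 1) ∧ ∀ j, ∫ x, g x ∂(μ j) = ∫ x, g₀ x ∂(μ j) := by
    intro g
    simp only [K, Set.mem_ofPred_eq, hin]
    refine and_congr ?_ Iff.rfl
    rw [← Lp.coeFn_le, ← Lp.coeFn_le, Filter.eventually_and]
    refine and_congr ?_ ?_
    · apply Filter.eventually_congr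
      filter_upwards [Lp.coeFn_zero ℝ 2 ν] with x hx
      rw [hx]; rfl
    · apply Filter.eventually_congr
      filter_upwards [hu] with x hx
      rw [hx]
  have hKc : Convex ℝ K := by
    intro a ha b hb s t hs ht hst
    rw [hK] at ha hb
    refine (hK _).2 ⟨?_, ?_⟩
    · filter_upwards [ha.1, hb.1, Lp.coeFn_add (s • a) (t • b), Lp.coeFn_smul s a, Lp.coeFn_smul t b] with x h1 h2 h3 h4 h5
      rw [h3, Pi.add_apply, h4, h5]
      simp only [Pi.smul_apply, smul_eq_mul]
      constructor
      · have := mul_nonneg hs h1.1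
        have := mul_nonneg ht h2.1
        linarith
      · nlinarith [mul_le_mul_of_nonneg_left h1.2 hs, mul_le_mul_of_nonneg_left h2.2 ht]
    · intro j
      rw [← hin, inner_add_right, inner_smul_right, inner_smul_right, hin, hin, ha.2, hb.2, ← add_mul, hst, one_mul]
  have hKcl : IsClosed K := by
    have : K = Set.Icc 0 (indicatorConstLp 2 MeasurableSet.univ (measure_ne_top ν _) (1 : ℝ)) ∩
      ⋂ j, {g | inner ℝ (f j) g = ∫ x, g₀ x ∂(μ j)} := by
      ext g; simp [K]
    rw [this]
    exact isClosed_Icc.inter (isClosed_iInter fun j => isClosed_eq (by fun_prop) continuous_const)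
  have hKne : K.Nonempty := by
    have hm : MemLp g₀ 2 ν := MemLp.of_bound hg₀.aestronglyMeasurable 1
      (Filter.Eventually.of_forall fun x => by rw [Real.norm_eq_abs, abs_of_nonneg (h0 x)]; exact h1 x)
    refine ⟨hm.toLp, (hK _).2 ⟨?_, fun j => ?_⟩⟩
    · filter_upwards [hm.coeFn_toLp] with x hx
      rw [hx]; exact ⟨h0 x, h1 x⟩
    · exact integral_congr_ae ((hac j).ae_le hm.coeFn_toLp)
  obtain ⟨g, hgK, hgext⟩ := hilbert_extreme K hKc hKcl
    ‖(indicatorConstLp 2 MeasurableSet.univ (measure_ne_top ν _) (1 : ℝ) : Lp ℝ 2 ν)‖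
    (fun g hg => norm_le_norm_of_abs_le_abs (by
      rw [abs_of_nonneg hg.1.1, abs_of_nonneg (hg.1.1.trans hg.1.2)]; exact hg.1.2)) hKne
  obtain ⟨hg01, hgint⟩ := (hK g).1 hgK
  have hgm : Measurable g := (Lp.stronglyMeasurable g).measurable
  have key : ∀ᵐ x ∂ν, g x = 0 ∨ g x = 1 := by
    by_contra hcon
    have hB : ∃ n : ℕ, 0 < ν {x | 1 / ((n : ℝ) + 1) ≤ g x ∧ g x ≤ 1 - 1 / ((n : ℝ) + 1)} := by
      by_contra! hn
      apply hcon
      have hn' : ∀ n : ℕ, ∀ᵐ x ∂ν, ¬ (1 / ((n : ℝ) + 1) ≤ g x ∧ g x ≤ 1 - 1 / ((n : ℝ) + 1)) := by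
        intro n
        rw [ae_iff]
        simpa using hn n
      filter_upwards [ae_all_iff.2 hn', hg01] with x hx hx01
      by_contra! hne
      have p1 : 0 < g x := lt_of_le_of_ne hx01.1 hne.1.symm
      have p2 : 0 < 1 - g x := sub_pos.2 (lt_of_le_of_ne hx01.2 hne.2)
      obtain ⟨n, hn⟩ := exists_nat_one_div_lt (lt_min p1 p2)
      exact hx n ⟨(hn.trans_le (min_le_left _ _)).le, by linarith [hn.trans_le (min_le_right _ _)]⟩
    obtain ⟨n, hn⟩ := hB
    set δ : ℝ := 1 / ((n : ℝ) + 1) with hδ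
    have hδ0 : 0 < δ := by positivity
    have hBm : MeasurableSet {x | δ ≤ g x ∧ g x ≤ 1 - δ} :=
      (measurableSet_le measurable_const hgm).inter (measurableSet_le hgm measurable_const)
    obtain ⟨A, hA1, hA2, hA3, hA4⟩ := split_many ν hsplit (Fintype.card ι) _ hBm hn
    obtain ⟨c, hc0, hc⟩ := exists_kernel (fun i k => (μ i).real (A k))
    obtain ⟨k₀, hk₀⟩ := Function.ne_iff.1 hc0
    have hs : 0 < ∑ k, |c k| :=
      Finset.sum_pos' (fun _ _ => abs_nonneg _) ⟨k₀, Finset.mem_univ _, abs_pos.2 hk₀⟩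
    let d : Fin (Fintype.card ι + 1) → ℝ := fun k => δ / (∑ k, |c k|) * c k
    have hd0 : d k₀ ≠ 0 := mul_ne_zero (div_pos hδ0 hs).ne' hk₀
    have hdle : ∀ k, |d k| ≤ δ := by
      intro k
      simp only [d]
      rw [abs_mul, abs_of_pos (div_pos hδ0 hs), div_mul_eq_mul_div, div_le_iff₀ hs]
      exact mul_le_mul_of_nonneg_left (Finset.single_le_sum (f := fun k => |c k|) (fun _ _ => abs_nonneg _) (Finset.mem_univ k)) hδ0.le
    have hd : ∀ i, ∑ k, (μ i).real (A k) * d k = 0 := by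
      intro i
      have : ∑ k, (μ i).real (A k) * d k = δ / (∑ k, |c k|) * ∑ k, (μ i).real (A k) * c k := by
        rw [Finset.mul_sum]
        exact Finset.sum_congr rfl fun k _ => by simp only [d]; ring
      rw [this, hc i, mul_zero]
    let h : S → ℝ := fun x => ∑ k, (A k).indicator (fun _ => d k) x
    have hhm : Measurable h := Finset.measurable_sum _ fun k _ => measurable_const.indicator (hA1 k)
    have hhA : ∀ k, ∀ x ∈ A k, h x = d k := by
      intro k x hx
      simp only [h]
      rw [Finset.sum_eq_single k]
      · simp [hx]
      · intro j _ hj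
        exact Set.indicator_of_notMem (fun hxj => Set.disjoint_left.1 (hA4 j k hj) hxj hx) _
      · simp
    have hhout : ∀ x, (∀ k, x ∉ A k) → h x = 0 := fun x hx =>
      Finset.sum_eq_zero fun k _ => Set.indicator_of_notMem (hx k) _
    have hhcases : ∀ x, h x = 0 ∨ (|h x| ≤ δ ∧ δ ≤ g x ∧ g x ≤ 1 - δ) := by
      intro x
      by_cases hx : ∃ k, x ∈ A k
      · obtain ⟨k, hk⟩ := hx
        right
        rw [hhA k x hk]
        exact ⟨hdle k, hA2 k hk⟩
      · left
        push Not at hx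
        exact hhout x hx
    have hhbd : ∀ x, |h x| ≤ δ := by
      intro x
      rcases hhcases x with h | h
      · rw [h, abs_zero]; exact hδ0.le
      · exact h.1
    have hhL : MemLp h 2 ν := MemLp.of_bound hhm.aestronglyMeasurable δ (Filter.Eventually.of_forall hhbd)
    have hhint : ∀ i, ∫ x, h x ∂(μ i) = 0 := by
      intro i
      simp only [h]
      rw [integral_finsetSum _ fun k _ => (integrable_const _).indicator (hA1 k)]
      rw [← hd i]
      refine Finset.sum_congr rfl fun k _ => ?_
      rw [integral_indicator_const _ (hA1 k), smul_eq_mul]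
    let hL : Lp ℝ 2 ν := hhL.toLp
    have hLc : hL =ᵐ[ν] h := hhL.coeFn_toLp
    have hhinner : ∀ i, inner ℝ (f i) hL = 0 := by
      intro i
      rw [hin, ← hhint i]
      exact integral_congr_ae ((hac i).ae_le hLc)
    have hp : g + hL ∈ K := by
      refine (hK _).2 ⟨?_, fun j => ?_⟩
      · filter_upwards [hg01, hLc, Lp.coeFn_add g hL] with x hx1 hx2 hx3
        rw [hx3, Pi.add_apply, hx2]
        rcases hhcases x with h | ⟨h1, h2, h3⟩
        · rw [h, add_zero]; exact hx1
        · have := abs_le.1 h1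
          constructor <;> linarith
      · rw [← hin, inner_add_right, hhinner, add_zero, hin, hgint]
    have hm : g - hL ∈ K := by
      refine (hK _).2 ⟨?_, fun j => ?_⟩
      · filter_upwards [hg01, hLc, Lp.coeFn_sub g hL] with x hx1 hx2 hx3
        rw [hx3, Pi.sub_apply, hx2]
        rcases hhcases x with h | ⟨h1, h2, h3⟩
        · rw [h, sub_zero]; exact hx1
        · have := abs_le.1 h1
          constructor <;> linarith
      · rw [← hin, inner_sub_right, hhinner, sub_zero, hin, hgint]
    have heq : g + hL = g := by
      refine hgext hp hm ⟨1 / 2, 1 / 2, by norm_num, by norm_num, by norm_num, ?_⟩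
      rw [← smul_add, add_add_sub_cancel, ← two_smul ℝ g, smul_smul]
      norm_num
    have hL0 : hL = 0 := by simpa using heq
    have hz : h =ᵐ[ν] 0 := by
      refine hLc.symm.trans ?_
      rw [hL0]
      exact Lp.coeFn_zero ℝ 2 ν
    have : ν (A k₀) = 0 := by
      refine measure_mono_null ?_ (ae_iff.1 hz)
      intro x hx
      simp only [Set.mem_ofPred_eq, hhA k₀ x hx]
      exact hd0
    exact (hA3 k₀).ne' this
  refine ⟨{x | g x = 1}, hgm (measurableSet_singleton 1), fun j => ?_⟩
  rw [← hgint j]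
  have hEm : MeasurableSet {x | g x = 1} := hgm (measurableSet_singleton 1)
  have : g =ᵐ[μ j] Set.indicator {x | g x = 1} (fun _ => (1 : ℝ)) := by
    filter_upwards [(hac j).ae_le key] with x hx
    by_cases h : g x = 1
    · simp [h]
    · simp [hx.resolve_right h]
  rw [integral_congr_ae this, integral_indicator_const _ hEm]
  simp

/-- separating a convex set from an open orthant -/
lemma sep_orthant {ι : Type*} [Fintype ι] (K : Set (ι → ℝ)) (hK : Convex ℝ K) (hne : K.Nonempty)
    (t : ι → ℝ) (hd : ∀ x ∈ K, ¬ ∀ i, t i < x i) :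
    ∃ w : ι → ℝ, (∀ i, 0 ≤ w i) ∧ w ≠ 0 ∧ ∀ x ∈ K, ∑ i, w i * x i ≤ ∑ i, w i * t i := by
  classical
  let D : Set (ι → ℝ) := Set.pi Set.univ fun i => Set.Ioi (t i)
  have hDc : Convex ℝ D := convex_pi fun i _ => convex_Ioi _
  have hDo : IsOpen D := isOpen_set_pi Set.finite_univ fun i _ => isOpen_Ioi
  have hdisj : Disjoint D K := Set.disjoint_left.2 fun x hx hxK => hd x hxK fun i => hx i trivial
  obtain ⟨f, u, h1, h2⟩ := geometric_hahn_banach_open hDc hDo hK hdisj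
  have hf : ∀ x, f x = ∑ i, f (Pi.single i 1) * x i := by
    intro x
    conv_lhs => rw [← Finset.univ_sum_single x]
    rw [map_sum]
    refine Finset.sum_congr rfl fun i _ => ?_
    have : (Pi.single i (x i) : ι → ℝ) = x i • Pi.single i 1 := by
      rw [← Pi.single_smul]; simp
    rw [this, map_smul, smul_eq_mul, mul_comm]
  have hone : (fun i => t i + 1) ∈ D := fun i _ => by simp
  have hfe : ∀ i, f (Pi.single i 1) ≤ 0 := by
    intro i
    by_contra! hpos
    have hb : ∀ s : ℝ, 0 ≤ s → f (fun i => t i + 1) + s * f (Pi.single i 1) < u := by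
      intro s hs
      have := h1 ((fun i => t i + 1) + s • Pi.single i 1) (by
        intro j _
        simp only [Pi.add_apply, Pi.smul_apply, smul_eq_mul, Set.mem_Ioi]
        have : 0 ≤ s * (Pi.single i 1 : ι → ℝ) j := by
          apply mul_nonneg hs
          by_cases hji : j = i
          · subst hji; simp
          · simp [hji]
        linarith)
      rwa [map_add, map_smul, smul_eq_mul] at this
    have h3 := h1 _ hone
    have := hb ((u - f (fun i => t i + 1)) / f (Pi.single i 1)) (by
      apply div_nonneg _ hpos.le; linarith)
    rw [div_mul_cancel₀ _ hpos.ne'] at this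
    linarith
  have hft : f t ≤ u := by
    by_contra! hlt
    have hb : ∀ s : ℝ, 0 < s → f t + s * f (fun _ => 1) < u := by
      intro s hs
      have := h1 (t + s • (fun _ => 1)) (by intro j _; simp [hs])
      rwa [map_add, map_smul, smul_eq_mul] at this
    have hle : f (fun _ => 1) ≤ 0 := by
      rw [hf]; exact Finset.sum_nonpos fun i _ => by simpa using hfe i
    rcases hle.lt_or_eq with h | h
    · have := hb ((f t - u) / (- f (fun _ => 1)) / 2) (by
        apply div_pos (div_pos _ _) <;> linarith)
      have e : (f t - u) / (- f (fun _ => 1)) / 2 * f (fun _ => 1) = -(f t - u) / 2 := by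
        have hne0 := h.ne
        generalize f (fun _ => 1) = y at hne0
        field_simp
      rw [e] at this
      linarith
    · have := hb 1 one_pos
      rw [h] at this
      linarith
  refine ⟨fun i => - f (Pi.single i 1), fun i => by simpa using hfe i, ?_, ?_⟩
  · intro h0
    have hz : ∀ x, f x = 0 := by
      intro x
      rw [hf]
      refine Finset.sum_eq_zero fun i _ => ?_
      have := congrFun h0 i
      simp only [Pi.zero_apply, neg_eq_zero] at this
      rw [this, zero_mul]
    obtain ⟨x, hx⟩ := hne
    have a1 := h1 _ hone
    have a2 := h2 x hx
    rw [hz] at a1 a2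
    linarith
  · intro x hx
    simp only [neg_mul, Finset.sum_neg_distrib]
    rw [← hf, ← hf]
    linarith [h2 x hx]

lemma lotteryEU_comb {C : Type*} (v : C → ℝ) (s t : ℝ) (p q : C →₀ ℝ) :
    lotteryEU v (s • p + t • q) = s * lotteryEU v p + t * lotteryEU v q := by
  have h : ∀ p, lotteryEU v p = Finsupp.linearCombination ℝ v p := fun p => rfl
  simp only [h, map_add, map_smul, smul_eq_mul]

lemma lotteryEU_single {C : Type*} (v : C → ℝ) (c : C) :
    lotteryEU v (Finsupp.single c 1) = v c := by
  simp [lotteryEU]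

lemma isLottery_single {C : Type*} (c : C) : IsLottery (Finsupp.single c (1 : ℝ)) := by
  classical
  refine ⟨fun d => ?_, by simp⟩
  rw [Finsupp.single_apply]; split_ifs <;> norm_num

lemma isLottery_iff {C : Type*} (p : C →₀ ℝ) :
    IsLottery p ↔ (∀ c, 0 ≤ p c) ∧ lotteryEU (fun _ => 1) p = 1 := by
  simp [IsLottery, lotteryEU]

lemma isLottery_comb {C : Type*} {s t : ℝ} (hs : 0 ≤ s) (ht : 0 ≤ t) (hst : s + t = 1)
    {p q : C →₀ ℝ} (hp : IsLottery p) (hq : IsLottery q) : IsLottery (s • p + t • q) := by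
  rw [isLottery_iff] at *
  refine ⟨fun c => ?_, ?_⟩
  · simp only [Finsupp.add_apply, Finsupp.smul_apply, smul_eq_mul]
    exact add_nonneg (mul_nonneg hs (hp.1 c)) (mul_nonneg ht (hq.1 c))
  · rw [lotteryEU_comb, hp.2, hq.2]; linarith

lemma lotteryEU_affine {C : Type*} {N : ℕ} (v₀ : C → ℝ) (v : Fin N → C → ℝ) (a : Fin N → ℝ) (b : ℝ)
    {p : C →₀ ℝ} (hp : IsLottery p) :
    lotteryEU (fun c => v₀ c - ((∑ i, a i * v i c) + b)) p =
      lotteryEU v₀ p - ((∑ i, a i * lotteryEU (v i) p) + b) := by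
  have h1 := ((isLottery_iff p).1 hp).2
  have hb : lotteryEU (fun _ => b) p = b := by
    have : lotteryEU (fun _ => b) p = b * lotteryEU (fun _ => 1) p := by
      simp only [lotteryEU, Finsupp.sum, Finset.mul_sum]
      exact Finset.sum_congr rfl fun _ _ => by ring
    rw [this, h1, mul_one]
  conv_rhs => rw [← hb]
  simp only [lotteryEU, Finsupp.sum, Finset.mul_sum]
  rw [Finset.sum_comm, ← Finset.sum_add_distrib, ← Finset.sum_sub_distrib]
  refine Finset.sum_congr rfl fun c _ => ?_
  rw [mul_sub, mul_add, Finset.mul_sum]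
  congr 2
  exact Finset.sum_congr rfl fun _ _ => by ring

lemma lotteryEU_bound {C : Type*} (r : C → ℝ) (e : ℝ) (hr : ∀ c, |r c| ≤ e)
    {p : C →₀ ℝ} (hp : IsLottery p) : |lotteryEU r p| ≤ e := by
  have h1 := hp.2
  simp only [lotteryEU, Finsupp.sum] at *
  calc |∑ c ∈ p.support, p c * r c| ≤ ∑ c ∈ p.support, |p c * r c| := Finset.abs_sum_le_sum_abs _ _
    _ ≤ ∑ c ∈ p.support, p c * e := Finset.sum_le_sum fun c _ => by
      rw [abs_mul, abs_of_nonneg (hp.1 c)]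
      exact mul_le_mul_of_nonneg_left (hr c) (hp.1 c)
    _ = e := by rw [← Finset.sum_mul, h1, one_mul]

/-- tastes -/
lemma tastes {C : Type*} {N : ℕ} {ε₁ : ℝ}
    (v₀ : C → ℝ) (v : Fin N → C → ℝ)
    (cstar cbot : C) (hc : ∀ i, v i cbot < v i cstar)
    (H : ∀ p q : C →₀ ℝ, IsLottery p → IsLottery q →
        (∀ i, lotteryEU (v i) q ≤ lotteryEU (v i) p) →
        lotteryEU v₀ q - ε₁ ≤ lotteryEU v₀ p) :
    ∃ (a : Fin N → ℝ) (b : ℝ), (∀ i, 0 ≤ a i) ∧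
        (∀ c, |v₀ c - ((∑ i, a i * v i c) + b)| ≤ ε₁ / 2) := by
  let X : (C →₀ ℝ) → (C →₀ ℝ) → Option (Fin N) → ℝ := fun p q o =>
    o.elim (lotteryEU v₀ q - lotteryEU v₀ p) (fun i => lotteryEU (v i) p - lotteryEU (v i) q)
  let K : Set (Option (Fin N) → ℝ) := {x | ∃ p q, IsLottery p ∧ IsLottery q ∧ x = X p q}
  have hKc : Convex ℝ K := by
    rintro _ ⟨p, q, hp, hq, rfl⟩ _ ⟨p', q', hp', hq', rfl⟩ s t hs ht hst
    refine ⟨s • p + t • p', s • q + t • q', isLottery_comb hs ht hst hp hp',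
      isLottery_comb hs ht hst hq hq', ?_⟩
    ext o
    cases o <;> simp [X, lotteryEU_comb] <;> ring
  obtain ⟨w, hw0, hwne, hw⟩ := sep_orthant K hKc
    ⟨_, Finsupp.single cbot 1, Finsupp.single cbot 1, isLottery_single _, isLottery_single _, rfl⟩
    (fun o => o.elim ε₁ (fun _ => 0)) (by
      rintro _ ⟨p, q, hp, hq, rfl⟩ hlt
      have h1 := hlt none
      simp only [X, Option.elim] at h1
      have := H p q hp hq (fun i => by
        have := hlt (some i)
        simp only [X, Option.elim] at this
        linarith)
      linarith)
  have hcc : ∀ c d, w none * (v₀ d - v₀ c) + ∑ i, w (some i) * (v i c - v i d) ≤ w none * ε₁ := by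
    intro c d
    have := hw _ ⟨Finsupp.single c 1, Finsupp.single d 1, isLottery_single _, isLottery_single _, rfl⟩
    simpa [Fintype.sum_option, X, lotteryEU_single] using this
  have hpos : 0 < w none := by
    refine lt_of_le_of_ne (hw0 none) fun h0 => hwne ?_
    have := hcc cstar cbot
    rw [← h0, zero_mul, zero_mul, zero_add] at this
    have hz : ∀ i ∈ Finset.univ, w (some i) * (v i cstar - v i cbot) = 0 := by
      rw [← Finset.sum_eq_zero_iff_of_nonneg]
      · refine le_antisymm this (Finset.sum_nonneg fun i _ => ?_)
        exact mul_nonneg (hw0 _) (sub_pos.2 (hc i)).le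
      · exact fun i _ => mul_nonneg (hw0 _) (sub_pos.2 (hc i)).le
    ext o
    cases o with
    | none => exact h0.symm
    | some i => exact (mul_eq_zero.1 (hz i (Finset.mem_univ _))).resolve_right (sub_pos.2 (hc i)).ne'
  let a : Fin N → ℝ := fun i => w (some i) / w none
  let r : C → ℝ := fun c => v₀ c - ∑ i, a i * v i c
  have hr : ∀ c d, r d - r c ≤ ε₁ := by
    intro c d
    have h := hcc c d
    have e : w none * (v₀ d - v₀ c) + ∑ i, w (some i) * (v i c - v i d) = w none * (r d - r c) := by
      simp only [r, a]
      have : ∑ i, w (some i) * (v i c - v i d) = w none * (∑ i, w (some i) / w none * v i c)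
          - w none * (∑ i, w (some i) / w none * v i d) := by
        rw [Finset.mul_sum, Finset.mul_sum, ← Finset.sum_sub_distrib]
        refine Finset.sum_congr rfl fun i _ => ?_
        field_simp
      rw [this]; ring
    rw [e] at h
    exact le_of_mul_le_mul_left h hpos
  have : Nonempty C := ⟨cbot⟩
  have hbdd : BddBelow (Set.range r) := ⟨r cbot - ε₁, by rintro _ ⟨c, rfl⟩; linarith [hr c cbot]⟩
  refine ⟨a, (⨅ c, r c) + ε₁ / 2, fun i => div_nonneg (hw0 _) hpos.le, fun c => ?_⟩
  have h1 : (⨅ c, r c) ≤ r c := ciInf_le hbdd c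
  have h2 : r c - ε₁ ≤ ⨅ c, r c := le_ciInf fun d => by linarith [hr d c]
  simp only [r] at h1 h2
  rw [abs_le]
  constructor <;> linarith

lemma tv_iff {S : Type*} [MeasurableSpace S] (R : SignedMeasure S) (hR : R Set.univ = 0)
    {e : ℝ} (he : 0 ≤ e) :
    R.totalVariation Set.univ ≤ ENNReal.ofReal e ↔ ∀ E, MeasurableSet E → -(e / 2) ≤ R E := by
  have hsub : ∀ E, MeasurableSet E → R E = R.toJordanDecomposition.posPart.real E -
    R.toJordanDecomposition.negPart.real E :=
    fun E hE => R.apply_eq_posPart_real_sub_negPart_real hE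
  have htv : R.totalVariation Set.univ =
      ENNReal.ofReal (2 * R.toJordanDecomposition.negPart.real Set.univ) := by
    have h1 := hsub _ MeasurableSet.univ
    rw [hR] at h1
    rw [SignedMeasure.totalVariation, Measure.add_apply, ← ofReal_measureReal,
      ← ofReal_measureReal, ← ENNReal.ofReal_add measureReal_nonneg measureReal_nonneg]
    congr 1
    linarith
  rw [htv, ENNReal.ofReal_le_ofReal_iff he]
  constructor
  · intro h E hE
    rw [hsub E hE]
    have h1 : R.toJordanDecomposition.negPart.real E ≤
      R.toJordanDecomposition.negPart.real Set.univ := measureReal_mono (Set.subset_univ _)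
    have h2 : 0 ≤ R.toJordanDecomposition.posPart.real E := measureReal_nonneg
    linarith
  · intro h
    obtain ⟨i, hi, h1, h2, h3, h4⟩ := R.toJordanDecomposition_spec
    have h5 := h iᶜ hi.compl
    have : R.toJordanDecomposition.negPart.real Set.univ = - R iᶜ := by
      rw [h4, SignedMeasure.toMeasureOfLEZero_real_apply _ _ _ MeasurableSet.univ, Set.inter_univ]
    linarith

lemma signedDiff_apply {S : Type*} [MeasurableSpace S] {N : ℕ} (P₀ : Measure S) (P : Fin N → Measure S)
    [IsProbabilityMeasure P₀] [∀ i, IsProbabilityMeasure (P i)] (l : Fin N → ℝ) (E : Set S)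
    (hE : MeasurableSet E) :
    (P₀.toSignedMeasure - ∑ i, l i • (P i).toSignedMeasure) E =
      P₀.real E - ∑ i, l i * (P i).real E := by
  have : ∀ s : Finset (Fin N), (∑ i ∈ s, l i • (P i).toSignedMeasure) E =
      ∑ i ∈ s, l i * (P i).real E := by
    classical
    intro s
    induction s using Finset.induction_on with
    | empty => simp
    | insert a s ha ih =>
      rw [Finset.sum_insert ha, Finset.sum_insert ha, VectorMeasure.add_apply, ih,
        VectorMeasure.smul_apply, Measure.toSignedMeasure_apply_measurable hE, smul_eq_mul]
  rw [VectorMeasure.sub_apply, this, Measure.toSignedMeasure_apply_measurable hE]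

/-- beliefs -/
lemma beliefs {S : Type*} [MeasurableSpace S] {N : ℕ} (hN : 1 ≤ N) {e : ℝ} (he : 0 ≤ e)
    (P₀ : Measure S) (P : Fin N → Measure S)
    [IsProbabilityMeasure P₀] [∀ i, IsProbabilityMeasure (P i)]
    (hP₀na : Nonatomic P₀) (hPna : ∀ i, Nonatomic (P i))
    (H : ∀ E F : Set S, MeasurableSet E → MeasurableSet F →
        (∀ i, P i F = P₀ F) →
        (∀ i, P i F ≤ P i E) →
        (P₀ F).toReal - e ≤ (P₀ E).toReal) :
    ∃ l : Fin N → ℝ, (∀ i, 0 ≤ l i) ∧ (∑ i, l i) = 1 ∧ 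
      ∀ E, MeasurableSet E → -e ≤ P₀.real E - ∑ i, l i * (P i).real E := by
  have hNe : Nonempty (Fin N) := ⟨⟨0, hN⟩⟩
  let Q : Option (Fin N) → Measure S := fun o => o.elim P₀ P
  have hQ : ∀ o, IsProbabilityMeasure (Q o) := by
    intro o; cases o <;> simp only [Q, Option.elim] <;> infer_instance
  have hQna : ∀ o, Nonatomic (Q o) := by
    intro o; cases o
    · exact hP₀na
    · exact hPna _
  have lyap := lyapunov Q hQna
  let X : Set S → Fin N → ℝ := fun E i => (P i).real E - P₀.real E
  let K : Set (Fin N → ℝ) := {x | ∃ E, MeasurableSet E ∧ x = X E}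
  have hKc : Convex ℝ K := by
    rintro _ ⟨E, hE, rfl⟩ _ ⟨F, hF, rfl⟩ s t hs ht hst
    obtain ⟨G, hG, hGi⟩ := lyap
      (fun x => s * E.indicator (fun _ => 1) x + t * F.indicator (fun _ => 1) x)
      (((measurable_const.indicator hE).const_mul s).add ((measurable_const.indicator hF).const_mul t))
      (fun x => by
        have h1 : 0 ≤ E.indicator (fun _ => (1 : ℝ)) x := Set.indicator_nonneg (fun _ _ => zero_le_one) _
        have h2 : 0 ≤ F.indicator (fun _ => (1 : ℝ)) x := Set.indicator_nonneg (fun _ _ => zero_le_one) _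
        positivity)
      (fun x => by
        have h1 : E.indicator (fun _ => (1 : ℝ)) x ≤ 1 := Set.indicator_le_self' (fun _ _ => zero_le_one) x
        have h2 : F.indicator (fun _ => (1 : ℝ)) x ≤ 1 := Set.indicator_le_self' (fun _ _ => zero_le_one) x
        nlinarith [mul_le_mul_of_nonneg_left h1 hs, mul_le_mul_of_nonneg_left h2 ht])
    have hGo : ∀ o, (Q o).real G = s * (Q o).real E + t * (Q o).real F := by
      intro o
      rw [hGi o, integral_add (((integrable_const _).indicator hE).const_mul s)
        (((integrable_const _).indicator hF).const_mul t), integral_const_mul, integral_const_mul,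
        integral_indicator_const _ hE, integral_indicator_const _ hF]
      simp
    refine ⟨G, hG, ?_⟩
    ext i
    have h0 := hGo none
    have h1 := hGo (some i)
    simp only [Q, Option.elim] at h0 h1
    simp only [X, Pi.add_apply, Pi.smul_apply, smul_eq_mul, h0, h1]
    ring
  obtain ⟨w, hw0, hwne, hw⟩ := sep_orthant K hKc ⟨_, ∅, MeasurableSet.empty, rfl⟩ (fun _ => e) (by
    rintro _ ⟨E, hE, rfl⟩ hlt
    obtain ⟨i₀, hi₀⟩ := Finite.exists_min (fun i => (P i).real E)
    obtain ⟨F, hF, hFi⟩ := lyap (fun _ => (P i₀).real E) measurable_const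
      (fun _ => measureReal_nonneg) (fun _ => measureReal_le_one)
    have hFo : ∀ o, (Q o).real F = (P i₀).real E := by
      intro o; rw [hFi]; simp
    have hF0 : P₀.real F = (P i₀).real E := hFo none
    have hFs : ∀ i, (P i).real F = (P i₀).real E := fun i => hFo (some i)
    have := H E F hE hF
      (fun i => by
        rw [← ENNReal.toReal_eq_toReal_iff' (measure_ne_top _ _) (measure_ne_top _ _)]
        exact (hFs i).trans hF0.symm)
      (fun i => by
        rw [← ENNReal.toReal_le_toReal (measure_ne_top _ _) (measure_ne_top _ _)]
        exact (hFs i).trans_le (hi₀ i))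
    have h2 := hlt i₀
    simp only [X] at h2
    change P₀.real F - e ≤ P₀.real E at this
    linarith)
  have hW : 0 < ∑ i, w i := by
    obtain ⟨i, hi⟩ := Function.ne_iff.1 hwne
    exact Finset.sum_pos' (fun i _ => hw0 i) ⟨i, Finset.mem_univ _, lt_of_le_of_ne (hw0 i) (Ne.symm hi)⟩
  refine ⟨fun i => w i / ∑ i, w i, fun i => div_nonneg (hw0 i) hW.le, ?_, fun E hE => ?_⟩
  · rw [← Finset.sum_div, div_self hW.ne']
  · have h := hw _ ⟨E, hE, rfl⟩
    simp only [X, mul_sub, Finset.sum_sub_distrib, ← Finset.sum_mul] at h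
    have e1 : ∑ i, w i / (∑ i, w i) * (P i).real E = (∑ i, w i * (P i).real E) / ∑ i, w i := by
      rw [Finset.sum_div]
      exact Finset.sum_congr rfl fun i _ => by ring
    have e2 : (∑ i, w i * (P i).real E) / ∑ i, w i ≤ e + P₀.real E := by
      rw [div_le_iff₀ hW]; linarith
    rw [e1]; linarith

/-- Proposition: SEU aggregation of tastes and beliefs.
Let `ε₁ ≥ 0`, `ε₂ ∈ [0,1]`, let `P₀, P₁, …, P_N` be nonatomic probability measures on
`(S, Σ_S)`, let `v₀, v₁, …, v_N : C → ℝ`, and assume there exist `c*, c_* ∈ C`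
unanimously strictly ranked.  Then the conjunction of `ε₁`-Lottery Pareto and
`(ε₂/2)`-Likelihood Dominance is equivalent to the existence of `a₁,…,a_N ≥ 0`, `b`,
and weights `λ₁,…,λ_N ≥ 0` summing to `1` such that
`sup_c |v₀(c) − (Σᵢ aᵢ vᵢ(c) + b)| ≤ ε₁/2` and the signed measure
`R = P₀ − Σᵢ λᵢ Pᵢ` has total variation norm `‖R‖₁ ≤ ε₂`. -/
theorem stmt12 {S : Type*} [MeasurableSpace S] {C : Type*} [Nonempty C]
    {N : ℕ} (hN : 1 ≤ N) {ε₁ ε₂ : ℝ} (hε₁ : 0 ≤ ε₁) (hε₂0 : 0 ≤ ε₂) (hε₂1 : ε₂ ≤ 1)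
    (P₀ : Measure S) (P : Fin N → Measure S)
    [IsProbabilityMeasure P₀] [∀ i, IsProbabilityMeasure (P i)]
    (hP₀na : Nonatomic P₀) (hPna : ∀ i, Nonatomic (P i))
    (v₀ : C → ℝ) (v : Fin N → C → ℝ)
    (cstar cbot : C) (hc₀ : v₀ cbot < v₀ cstar) (hc : ∀ i, v i cbot < v i cstar) :
    -- (i): ε₁-Lottery Pareto and (ε₂/2)-Likelihood Dominance
    ((∀ p q : C →₀ ℝ, IsLottery p → IsLottery q →
        (∀ i, lotteryEU (v i) q ≤ lotteryEU (v i) p) →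
        lotteryEU v₀ q - ε₁ ≤ lotteryEU v₀ p) ∧
      (∀ E F : Set S, MeasurableSet E → MeasurableSet F →
        (∀ i, P i F = P₀ F) →
        (∀ i, P i F ≤ P i E) →
        (P₀ F).toReal - ε₂ / 2 ≤ (P₀ E).toReal)) ↔
    -- (ii): approximate utilitarian aggregation of tastes and linear pooling of beliefs
    (∃ (a : Fin N → ℝ) (b : ℝ), (∀ i, 0 ≤ a i) ∧
        (∀ c, |v₀ c - ((∑ i, a i * v i c) + b)| ≤ ε₁ / 2) ∧
      ∃ l : Fin N → ℝ, (∀ i, 0 ≤ l i) ∧ (∑ i, l i) = 1 ∧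
        (P₀.toSignedMeasure - ∑ i, l i • (P i).toSignedMeasure).totalVariation
            Set.univ ≤ ENNReal.ofReal ε₂) := by
  have hR0 : ∀ l : Fin N → ℝ, (∑ i, l i) = 1 →
      (P₀.toSignedMeasure - ∑ i, l i • (P i).toSignedMeasure) Set.univ = 0 := by
    intro l hl
    rw [signedDiff_apply _ _ _ _ MeasurableSet.univ]
    simp [hl]
  constructor
  · rintro ⟨H1, H2⟩
    obtain ⟨a, b, ha, hab⟩ := tastes v₀ v cstar cbot hc H1
    obtain ⟨l, hl0, hl1, hl⟩ := beliefs hN (by linarith : 0 ≤ ε₂ / 2) P₀ P hP₀na hPna H2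
    refine ⟨a, b, ha, hab, l, hl0, hl1, ?_⟩
    rw [tv_iff _ (hR0 l hl1) hε₂0]
    intro E hE
    rw [signedDiff_apply _ _ _ _ hE]
    exact hl E hE
  · rintro ⟨a, b, ha, hab, l, hl0, hl1, hl⟩
    constructor
    · intro p q hp hq hpq
      have h1 := abs_le.1 (lotteryEU_bound _ _ hab hp)
      have h2 := abs_le.1 (lotteryEU_bound _ _ hab hq)
      rw [lotteryEU_affine v₀ v a b hp] at h1
      rw [lotteryEU_affine v₀ v a b hq] at h2
      have h3 : ∑ i, a i * lotteryEU (v i) q ≤ ∑ i, a i * lotteryEU (v i) p :=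
        Finset.sum_le_sum fun i _ => mul_le_mul_of_nonneg_left (hpq i) (ha i)
      linarith [h1.1, h2.2]
    · intro E F hE hF hF0 hFE
      have h1 := (tv_iff _ (hR0 l hl1) hε₂0).1 hl E hE
      rw [signedDiff_apply _ _ _ _ hE] at h1
      have h2 : P₀.real F ≤ ∑ i, l i * (P i).real E := by
        calc P₀.real F = ∑ i, l i * P₀.real F := by rw [← Finset.sum_mul, hl1, one_mul]
          _ ≤ _ := Finset.sum_le_sum fun i _ => mul_le_mul_of_nonneg_left (by
              rw [measureReal_def, ← hF0 i]
              exact ENNReal.toReal_mono (measure_ne_top _ _) (hFE i)) (hl0 i)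
      change P₀.real F - ε₂ / 2 ≤ P₀.real E
      linarith
end
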